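/- Let ρ ∈ M_m ⊗ M_n be a density matrix and fix 1 ≤ k ≤ min(m,n). If SN(ρ) ≤ k, then the trace norm of the realignment satisfies ‖L(ρ)‖_tr ≤ k. -/

import Mathlib

open scoped Kronecker ComplexOrder
open Matrix

namespace Ent

variable {ι κ : Type*} [Fintype ι] [Fintype κ]

/-- Inner product ⟨v,w⟩ = Σᵢ conj(v i) * (w i) (conjugate-linear in the first argument). -/
noncomputable def vinner (v w : ι → ℂ) : ℂ := dotProduct (star v) w

/-- An elementary (product) tensor a ⊗ b in ℂ^ι ⊗ ℂ^κ. -/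
def prodVec (a : ι → ℂ) (b : κ → ℂ) : ι × κ → ℂ := fun p => a p.1 * b p.2

/-- `v` has Schmidt rank at most `k`. -/
def SchmidtRankLE (k : ℕ) (v : ι × κ → ℂ) : Prop :=
  ∃ (a : Fin k → ι → ℂ) (b : Fin k → κ → ℂ), v = ∑ i, prodVec (a i) (b i)

/-- The rank-one operator |v⟩⟨w|. -/
noncomputable def ketBra (v : ι → ℂ) (w : κ → ℂ) : Matrix ι κ ℂ :=
  Matrix.vecMulVec v (star w)

/-- A finite family of vectors is orthonormal. -/
def Orthonormal' {N : Type*} [DecidableEq N] (v : N → ι → ℂ) : Prop :=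
  ∀ i j, vinner (v i) (v j) = if i = j then 1 else 0

/-- The S(k)-norm of `X ∈ M_ι ⊗ M_κ`. -/
noncomputable def SkNorm (k : ℕ) (X : Matrix (ι × κ) (ι × κ) ℂ) : ℝ :=
  sSup { r | ∃ v w : ι × κ → ℂ, vinner v v = 1 ∧ vinner w w = 1 ∧
    SchmidtRankLE k v ∧ SchmidtRankLE k w ∧
    r = ‖vinner v (X.mulVec w)‖ }

/-- The product numerical radius r_k^⊗. -/
noncomputable def prodRad (k : ℕ) (Y : Matrix (ι × κ) (ι × κ) ℂ) : ℝ :=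
  sSup { r | ∃ v : ι × κ → ℂ, vinner v v = 1 ∧ SchmidtRankLE k v ∧
    r = ‖vinner v (Y.mulVec v)‖ }

/-- The norm ‖·‖_{γ,k}. -/
noncomputable def gammaNorm (k : ℕ) (X : Matrix (ι × κ) (ι × κ) ℂ) : ℝ :=
  sInf { r | ∃ (N : ℕ) (c : Fin N → ℂ) (v w : Fin N → (ι × κ → ℂ)),
    (∀ i, vinner (v i) (v i) = 1 ∧ vinner (w i) (w i) = 1 ∧
      SchmidtRankLE k (v i) ∧ SchmidtRankLE k (w i)) ∧
    X = ∑ i, c i • ketBra (v i) (w i) ∧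
    r = ∑ i, ‖c i‖ }

/-- `ρ` is a density matrix. -/
def IsDensity (ρ : Matrix ι ι ℂ) : Prop := ρ.PosSemidef ∧ ρ.trace = 1

/-- `ρ` has Schmidt number at most `k`: it is a convex combination of projections onto
unit vectors of Schmidt rank at most `k`. -/
def SchmidtNumLE (k : ℕ) (ρ : Matrix (ι × κ) (ι × κ) ℂ) : Prop :=
  ∃ (N : ℕ) (p : Fin N → ℝ) (v : Fin N → (ι × κ → ℂ)),
    (∀ i, 0 ≤ p i ∧ vinner (v i) (v i) = 1 ∧ SchmidtRankLE k (v i)) ∧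
    (∑ i, p i) = 1 ∧ ρ = ∑ i, p i • ketBra (v i) (v i)

/-- The robustness norm R_k on Hermitian operators. -/
noncomputable def Rk (k : ℕ) (Y : Matrix (ι × κ) (ι × κ) ℂ) : ℝ :=
  sInf { r | ∃ (c₁ c₂ : ℝ) (ρ₁ ρ₂ : Matrix (ι × κ) (ι × κ) ℂ),
    0 ≤ c₁ ∧ 0 ≤ c₂ ∧ IsDensity ρ₁ ∧ IsDensity ρ₂ ∧
    SchmidtNumLE k ρ₁ ∧ SchmidtNumLE k ρ₂ ∧
    Y = c₁ • ρ₁ - c₂ • ρ₂ ∧ r = c₁ + c₂ }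

/-- `Y` is k-block positive: ⟨v|Y|v⟩ ≥ 0 for every unit vector of Schmidt rank at most `k`. -/
def KBlockPos (k : ℕ) (Y : Matrix (ι × κ) (ι × κ) ℂ) : Prop :=
  ∀ v : ι × κ → ℂ, vinner v v = 1 → SchmidtRankLE k v →
    0 ≤ (vinner v (Y.mulVec v)).re

/-- Dual of a norm on matrices, w.r.t. the Hilbert–Schmidt inner product ⟨W,X⟩ = Tr(Wᴴ X). -/
noncomputable def dualNormM (f : Matrix ι κ ℂ → ℝ) (X : Matrix ι κ ℂ) : ℝ :=
  sSup { r | ∃ W : Matrix ι κ ℂ, f W ≤ 1 ∧ r = ‖(Wᴴ * X).trace‖ }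

/-- Dual of a norm, computed in the real Hilbert space of Hermitian matrices with the
Hilbert–Schmidt inner product ⟨W,Y⟩ = Tr(WY). -/
noncomputable def dualNormHerm (f : Matrix ι ι ℂ → ℝ) (Y : Matrix ι ι ℂ) : ℝ :=
  sSup { r | ∃ W : Matrix ι ι ℂ, W.IsHermitian ∧ f W ≤ 1 ∧ r = |((W * Y).trace).re| }

/-- The Frobenius norm of a matrix. -/
noncomputable def frobNorm (X : Matrix ι κ ℂ) : ℝ :=
  Real.sqrt (∑ i, ∑ j, Complex.normSq (X i j))

/-- The (k,2)-norm: ‖X‖_{(k,2)} = sup { |Tr(XY)| : rank Y ≤ k, ‖Y‖_F ≤ 1 }. -/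
noncomputable def kNorm (k : ℕ) (X : Matrix ι κ ℂ) : ℝ :=
  sSup { r | ∃ Y : Matrix κ ι ℂ, Y.rank ≤ k ∧ frobNorm Y ≤ 1 ∧
    r = ‖(X * Y).trace‖ }

/-- The trace norm: the sum of the singular values, i.e. of the square roots of the
eigenvalues of Xᴴ X. -/
noncomputable def traceNorm [DecidableEq κ] (X : Matrix ι κ ℂ) : ℝ :=
  ∑ i, Real.sqrt ((Matrix.isHermitian_conjTranspose_mul_self X).eigenvalues i)

/-- The s(k) vector norm: sup of |⟨u,w⟩| over unit vectors u of Schmidt rank at most k. -/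
noncomputable def skVecNorm (k : ℕ) (w : ι × κ → ℂ) : ℝ :=
  sSup { r | ∃ u : ι × κ → ℂ, vinner u u = 1 ∧ SchmidtRankLE k u ∧
    r = ‖vinner u w‖ }

/-- Dual of a norm on vectors. -/
noncomputable def dualNormV (f : (ι × κ → ℂ) → ℝ) (v : ι × κ → ℂ) : ℝ :=
  sSup { r | ∃ w : ι × κ → ℂ, f w ≤ 1 ∧ r = ‖vinner w v‖ }

/-- The realignment map, L(X)_{(i,k),(j,l)} = X_{(i,j),(k,l)}. -/
def realign {m n : ℕ} (X : Matrix (Fin m × Fin n) (Fin m × Fin n) ℂ) :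
    Matrix (Fin m × Fin m) (Fin n × Fin n) ℂ :=
  fun p q => X (p.1, q.1) (p.2, q.2)

/-- The projective tensor norm on M_{m,n} ⊗ M_{m,n}. -/
noncomputable def projNorm {m n : ℕ} (Z : Matrix (Fin m × Fin m) (Fin n × Fin n) ℂ) : ℝ :=
  sInf { r | ∃ (N : ℕ) (A B : Fin N → Matrix (Fin m) (Fin n) ℂ),
    Z = ∑ i, A i ⊗ₖ B i ∧ r = ∑ i, traceNorm (A i) * traceNorm (B i) }

/-!
For a pure state `|v⟩⟨v|` with coefficient matrix `V`, the realignment is `V ⊗ V̄`. The trace norm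
is multiplicative on Kronecker products and invariant under entrywise conjugation, so it takes the
value `‖V‖_tr²` there. Cauchy–Schwarz on the nonzero singular values bounds this by
`rank V * ‖V‖_F²`, which is at most the Schmidt rank when `v` is a unit vector. Convexity of the
trace norm, proved by duality with the operator norm, extends the bound to mixtures.
-/

theorem coe_frobNorm_sq (X : Matrix ι κ ℂ) : ((frobNorm X ^ 2 : ℝ) : ℂ) = (Xᴴ * X).trace := by
  have hnonneg : 0 ≤ ∑ i, ∑ j, Complex.normSq (X i j) :=
    Finset.sum_nonneg fun i _ ↦ Finset.sum_nonneg fun j _ ↦ Complex.normSq_nonneg _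
  rw [frobNorm, Real.sq_sqrt hnonneg, Finset.sum_comm]
  simp [trace, Matrix.mul_apply, Complex.normSq_eq_conj_mul_self]

section TraceNorm

open scoped Finset MatrixOrder Matrix.Norms.L2Operator

theorem exists_posSemidef_mul_self_eq_conjTranspose_mul_self (X : Matrix ι κ ℂ) :
    ∃ P : Matrix κ κ ℂ, P.PosSemidef ∧ P * P = Xᴴ * X := by
  classical
  exact ⟨CFC.sqrt (Xᴴ * X), (CFC.sqrt_nonneg _).posSemidef,
    CFC.sqrt_mul_sqrt_self _ (posSemidef_conjTranspose_mul_self X).nonneg⟩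

variable [DecidableEq κ]

theorem trace_cfc_eq_sum_eigenvalues {A : Matrix κ κ ℂ} (hA : A.IsHermitian) (f : ℝ → ℝ) :
    (cfc f A).trace = ∑ i, (f (hA.eigenvalues i) : ℂ) := by
  rw [hA.cfc_eq, Matrix.IsHermitian.cfc, Unitary.conjStarAlgAut_apply, trace_mul_cycle,
    Unitary.coe_star_mul_self, one_mul, trace_diagonal]
  rfl

theorem coe_traceNorm_eq_trace_cfc_sqrt (X : Matrix ι κ ℂ) :
    (traceNorm X : ℂ) = (cfc Real.sqrt (Xᴴ * X)).trace := by
  rw [trace_cfc_eq_sum_eigenvalues (isHermitian_conjTranspose_mul_self X), traceNorm,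
    Complex.ofReal_sum]

theorem coe_traceNorm_eq_trace_of_mul_self_eq {X : Matrix ι κ ℂ} {P : Matrix κ κ ℂ}
    (hP : P.PosSemidef) (hPX : P * P = Xᴴ * X) : (traceNorm X : ℂ) = P.trace := by
  rw [coe_traceNorm_eq_trace_cfc_sqrt, ← CFC.sqrt_unique hPX hP.nonneg,
    CFC.sqrt_eq_real_sqrt _ (posSemidef_conjTranspose_mul_self X).nonneg, cfcₙ_eq_cfc]

theorem traceNorm_kronecker {ι' κ' : Type*} [Fintype ι'] [Fintype κ'] [DecidableEq κ']
    (X : Matrix ι κ ℂ) (Y : Matrix ι' κ' ℂ) :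
    traceNorm (X ⊗ₖ Y) = traceNorm X * traceNorm Y := by
  obtain ⟨P, hP, hPX⟩ := exists_posSemidef_mul_self_eq_conjTranspose_mul_self X
  obtain ⟨Q, hQ, hQY⟩ := exists_posSemidef_mul_self_eq_conjTranspose_mul_self Y
  have hPQ : (P ⊗ₖ Q) * (P ⊗ₖ Q) = (X ⊗ₖ Y)ᴴ * (X ⊗ₖ Y) := by
    rw [conjTranspose_kronecker, ← mul_kronecker_mul, ← mul_kronecker_mul, hPX, hQY]
  apply Complex.ofReal_injective
  rw [Complex.ofReal_mul, coe_traceNorm_eq_trace_of_mul_self_eq (hP.kronecker hQ) hPQ,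
    coe_traceNorm_eq_trace_of_mul_self_eq hP hPX, coe_traceNorm_eq_trace_of_mul_self_eq hQ hQY,
    trace_kronecker]

theorem traceNorm_map_star (X : Matrix ι κ ℂ) : traceNorm (X.map star) = traceNorm X := by
  obtain ⟨P, hP, hPX⟩ := exists_posSemidef_mul_self_eq_conjTranspose_mul_self X
  have hPT : Pᵀ * Pᵀ = (X.map star)ᴴ * X.map star := by
    rw [← transpose_mul, hPX, transpose_mul]
    simp [conjTranspose, ← transpose_map, Function.comp_def]
  apply Complex.ofReal_injective
  rw [coe_traceNorm_eq_trace_of_mul_self_eq hP.transpose hPT,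
    coe_traceNorm_eq_trace_of_mul_self_eq hP hPX, trace_transpose]

theorem traceNorm_smul (c : ℂ) (X : Matrix ι κ ℂ) : traceNorm (c • X) = ‖c‖ * traceNorm X := by
  obtain ⟨P, hP, hPX⟩ := exists_posSemidef_mul_self_eq_conjTranspose_mul_self X
  have hcP : ((‖c‖ : ℂ) • P) * ((‖c‖ : ℂ) • P) = (c • X)ᴴ * (c • X) := by
    rw [conjTranspose_smul, smul_mul_smul_comm, Matrix.smul_mul, Matrix.mul_smul, smul_smul,
      hPX, ← sq, ← Complex.conj_mul', Complex.star_def]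
  apply Complex.ofReal_injective
  rw [coe_traceNorm_eq_trace_of_mul_self_eq (hP.smul (by simp)) hcP, trace_smul,
    ← coe_traceNorm_eq_trace_of_mul_self_eq hP hPX, smul_eq_mul, Complex.ofReal_mul]

theorem trace_conjTranspose_mul_eq_sum_inner {τ : Type*} [Fintype τ]
    (W X : Matrix ι κ ℂ) (b : OrthonormalBasis τ ℂ (EuclideanSpace ℂ κ)) :
    (Wᴴ * X).trace = ∑ t, inner ℂ (toEuclideanLin W (b t)) (toEuclideanLin X (b t)) := by
  classical
  have htrace : (Wᴴ * X).trace = (toEuclideanLin (Wᴴ * X)).trace ℂ _ := by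
    rw [toEuclideanLin_eq_toLin_orthonormal, trace_toLin_eq]
  have hcomp : toEuclideanLin (Wᴴ * X) = (toEuclideanLin W).adjoint ∘ₗ toEuclideanLin X := by
    rw [← toEuclideanLin_conjTranspose_eq_adjoint]
    exact toLpLin_mul 2 2 2 _ _
  rw [htrace, hcomp, LinearMap.trace_eq_sum_inner _ b]
  simp only [LinearMap.comp_apply, LinearMap.adjoint_inner_right]

theorem norm_toEuclideanLin_eigenvectorBasis (X : Matrix ι κ ℂ) (i : κ) :
    ‖toEuclideanLin X ((isHermitian_conjTranspose_mul_self X).eigenvectorBasis i)‖ =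
      √((isHermitian_conjTranspose_mul_self X).eigenvalues i) := by
  rw [IsHermitian.eigenvalues_eq, ← mulVec_mulVec, dotProduct_mulVec, ← star_mulVec,
    dotProduct_comm, norm_eq_sqrt_re_inner (𝕜 := ℂ), EuclideanSpace.inner_eq_star_dotProduct]
  rfl

theorem norm_trace_conjTranspose_mul_le (W X : Matrix ι κ ℂ) :
    ‖(Wᴴ * X).trace‖ ≤ ‖W‖ * traceNorm X := by
  set u := (isHermitian_conjTranspose_mul_self X).eigenvectorBasis
  have hWu (i : κ) : ‖toEuclideanLin W (u i)‖ ≤ ‖W‖ :=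
    calc ‖toEuclideanLin W (u i)‖ ≤ ‖W‖ * ‖u i‖ := W.l2_opNorm_mulVec (u i)
      _ = ‖W‖ := by rw [u.norm_eq_one, mul_one]
  rw [trace_conjTranspose_mul_eq_sum_inner W X u, traceNorm, Finset.mul_sum]
  refine norm_sum_le_of_le _ fun i _ ↦ ?_
  rw [← norm_toEuclideanLin_eigenvectorBasis X i]
  exact (norm_inner_le_norm _ _).trans (mul_le_mul_of_nonneg_right (hWu i) (norm_nonneg _))

theorem traceNorm_nonneg (X : Matrix ι κ ℂ) : 0 ≤ traceNorm X :=
  Finset.sum_nonneg fun _ _ ↦ Real.sqrt_nonneg _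

-- The optimal `W` is the polar factor `X |X|⁻¹`, with `|X|⁻¹` read as `0` on the kernel of `X`.
theorem exists_norm_le_one_trace_conjTranspose_mul_eq_traceNorm (X : Matrix ι κ ℂ) :
    ∃ W : Matrix ι κ ℂ, ‖W‖ ≤ 1 ∧ (Wᴴ * X).trace = traceNorm X := by
  set H := Xᴴ * X
  have hH : IsSelfAdjoint H := isHermitian_conjTranspose_mul_self X
  have hcont (f : ℝ → ℝ) : ContinuousOn f (spectrum ℝ H) := H.finite_real_spectrum.continuousOn f
  let invAbs := cfc (fun x ↦ (√x)⁻¹) H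
  have hadj : invAbsᴴ = invAbs := (cfc_predicate (fun x ↦ (√x)⁻¹) H : IsSelfAdjoint invAbs)
  have hmul : invAbs * H = cfc Real.sqrt H :=
    calc invAbs * H = invAbs * cfc (fun x ↦ x) H := by rw [cfc_id' ℝ H]
      _ = cfc (fun x ↦ (√x)⁻¹ * x) H := (cfc_mul _ _ H (hcont _) (hcont _)).symm
      _ = cfc Real.sqrt H := by simp only [inv_mul_eq_div, Real.div_sqrt]
  have hWX : (X * invAbs)ᴴ * X = cfc Real.sqrt H := by
    rw [conjTranspose_mul, Matrix.mul_assoc, hadj, hmul]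
  have hWW : (X * invAbs)ᴴ * (X * invAbs) = cfc (fun x ↦ √x * (√x)⁻¹) H := by
    rw [← Matrix.mul_assoc, hWX, cfc_mul _ _ H (hcont _) (hcont _)]
  refine ⟨X * invAbs, ?_, by rw [hWX, coe_traceNorm_eq_trace_cfc_sqrt]⟩
  rw [← sq_le_one_iff₀ (norm_nonneg _), sq, ← l2_opNorm_conjTranspose_mul_self, hWW]
  refine norm_cfc_le zero_le_one fun x _ ↦ ?_
  rw [Real.norm_of_nonneg (by positivity)]
  exact mul_inv_le_one

theorem traceNorm_sum_le {τ : Type*} (s : Finset τ) (X : τ → Matrix ι κ ℂ) :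
    traceNorm (∑ t ∈ s, X t) ≤ ∑ t ∈ s, traceNorm (X t) := by
  obtain ⟨W, hW, hWX⟩ := exists_norm_le_one_trace_conjTranspose_mul_eq_traceNorm (∑ t ∈ s, X t)
  calc traceNorm (∑ t ∈ s, X t) = ‖(Wᴴ * ∑ t ∈ s, X t).trace‖ := by
        rw [hWX, Complex.norm_of_nonneg (traceNorm_nonneg _)]
    _ = ‖∑ t ∈ s, (Wᴴ * X t).trace‖ := by rw [Matrix.mul_sum, trace_sum]
    _ ≤ ∑ t ∈ s, traceNorm (X t) := norm_sum_le_of_le s fun t _ ↦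
        (norm_trace_conjTranspose_mul_le W (X t)).trans
          (mul_le_of_le_one_left (traceNorm_nonneg _) hW)

theorem frobNorm_sq_eq_sum_eigenvalues (X : Matrix ι κ ℂ) :
    frobNorm X ^ 2 = ∑ i, (isHermitian_conjTranspose_mul_self X).eigenvalues i := by
  apply Complex.ofReal_injective
  rw [coe_frobNorm_sq, (isHermitian_conjTranspose_mul_self X).trace_eq_sum_eigenvalues]
  simp

theorem traceNorm_sq_le_rank_mul_frobNorm_sq (X : Matrix ι κ ℂ) :
    traceNorm X ^ 2 ≤ X.rank * frobNorm X ^ 2 := by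
  set eig := (isHermitian_conjTranspose_mul_self X).eigenvalues
  have heig (i : κ) : 0 ≤ eig i := (posSemidef_conjTranspose_mul_self X).eigenvalues_nonneg i
  have hrank : X.rank = #{i | eig i ≠ 0} := by
    rw [← rank_conjTranspose_mul_self, IsHermitian.rank_eq_card_non_zero_eigs,
      Fintype.card_subtype]
  calc traceNorm X ^ 2 = (∑ i with eig i ≠ 0, √(eig i)) ^ 2 := by
        rw [Finset.sum_filter_of_ne (p := fun i ↦ eig i ≠ 0)
          fun i _ hi h ↦ hi (by rw [h, Real.sqrt_zero])]
        rfl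
    _ ≤ X.rank * ∑ i with eig i ≠ 0, √(eig i) ^ 2 := by
        rw [hrank]
        exact sq_sum_le_card_mul_sum_sq
    _ = X.rank * frobNorm X ^ 2 := by
        simp only [Real.sq_sqrt (heig _)]
        rw [Finset.sum_filter_ne_zero, frobNorm_sq_eq_sum_eigenvalues]

end TraceNorm

section Schmidt

/-- The matrix `∑ vᵢⱼ eᵢ eⱼᵀ` of a bipartite vector `v = ∑ vᵢⱼ eᵢ ⊗ eⱼ`. It turns the
Schmidt rank of `v` into a matrix rank and the realignment of `|v⟩⟨w|` into a Kronecker product. -/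
def coeffMatrix (v : ι × κ → ℂ) : Matrix ι κ ℂ := Matrix.of fun i j ↦ v (i, j)

theorem SchmidtRankLE.rank_coeffMatrix_le {α : Type*} {k : ℕ} {v : α × κ → ℂ}
    (hv : SchmidtRankLE k v) : (coeffMatrix v).rank ≤ k := by
  obtain ⟨a, b, rfl⟩ := hv
  have hab : coeffMatrix (∑ l, prodVec (a l) (b l)) = (Matrix.of a)ᵀ * Matrix.of b := by
    ext i j
    simp [coeffMatrix, prodVec, Matrix.mul_apply]
  rw [hab]
  exact (rank_mul_le_left _ _).trans ((rank_le_card_width _).trans_eq (Fintype.card_fin k))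

theorem coe_frobNorm_coeffMatrix_sq (v : ι × κ → ℂ) :
    ((frobNorm (coeffMatrix v) ^ 2 : ℝ) : ℂ) = vinner v v := by
  rw [coe_frobNorm_sq]
  simp [trace, Matrix.mul_apply, vinner, dotProduct, Fintype.sum_prod_type_right, coeffMatrix]

variable {m n : ℕ}

theorem realign_ketBra (v w : Fin m × Fin n → ℂ) :
    realign (ketBra v w) = coeffMatrix v ⊗ₖ (coeffMatrix w).map star :=
  rfl

theorem realign_sum_smul {τ R : Type*} [SMul R ℂ] (s : Finset τ) (c : τ → R)
    (X : τ → Matrix (Fin m × Fin n) (Fin m × Fin n) ℂ) :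
    realign (∑ t ∈ s, c t • X t) = ∑ t ∈ s, c t • realign (X t) := by
  ext x y
  simp [realign, Matrix.sum_apply]

theorem traceNorm_realign_ketBra_self_le {k : ℕ} {v : Fin m × Fin n → ℂ}
    (hv : SchmidtRankLE k v) (hunit : vinner v v = 1) :
    traceNorm (realign (ketBra v v)) ≤ k := by
  have hfrob : frobNorm (coeffMatrix v) ^ 2 = 1 := by
    exact_mod_cast (coe_frobNorm_coeffMatrix_sq v).trans hunit
  calc traceNorm (realign (ketBra v v)) = traceNorm (coeffMatrix v) ^ 2 := by
        rw [realign_ketBra, traceNorm_kronecker, traceNorm_map_star, sq]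
    _ ≤ (coeffMatrix v).rank * frobNorm (coeffMatrix v) ^ 2 :=
        traceNorm_sq_le_rank_mul_frobNorm_sq _
    _ ≤ k := by
        rw [hfrob, mul_one]
        exact_mod_cast hv.rank_coeffMatrix_le

end Schmidt

/-- if `ρ` is a density matrix with `SN(ρ) ≤ k`, then `‖L(ρ)‖_tr ≤ k`. -/
theorem traceNorm_realign_le {m n k : ℕ} (hk1 : 1 ≤ k) (hk : k ≤ min m n)
    (ρ : Matrix (Fin m × Fin n) (Fin m × Fin n) ℂ) (hρ : IsDensity ρ)
    (hSN : SchmidtNumLE k ρ) :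
    traceNorm (realign ρ) ≤ k := by
  obtain ⟨N, p, v, hv, hp, rfl⟩ := hSN
  calc traceNorm (realign (∑ t, p t • ketBra (v t) (v t)))
      ≤ ∑ t, traceNorm (p t • realign (ketBra (v t) (v t))) := by
        rw [realign_sum_smul]
        exact traceNorm_sum_le _ _
    _ = ∑ t, p t * traceNorm (realign (ketBra (v t) (v t))) := by
        refine Finset.sum_congr rfl fun t _ ↦ ?_
        rw [← Complex.coe_smul, traceNorm_smul, Complex.norm_of_nonneg (hv t).1]
    _ ≤ ∑ t, p t * k := by
        gcongr with t
        · exact (hv t).1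
        · exact traceNorm_realign_ketBra_self_le (hv t).2.2 (hv t).2.1
    _ = k := by rw [← Finset.sum_mul, hp, one_mul]

end Ent
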